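/- Suppose G acts linearly on a finite dimensional vector space V over a field k whose characteristic is coprime to |G|, and suppose H_{λ,κ} is a PBW deformation of S(V)⋊G. Define γ: V⊗kG → kG by γ(v⊗g) = (1/|G|) Σ_{a,b∈G} λ_{ab}(b, ᵇ⁻¹v) ag, and write γ(v) = γ(v⊗1). Define κ': V×V → kG ⊕ (V⊗kG) by κ'(u,v) = γ(u)γ(v) − γ(v)γ(u) + λ(γ(u), v) − λ(γ(v), u) + κ(u,v) − κ^L(u,v) + (1/|G|) Σ_{g∈G} (1 − γ)((ᵍκ^L)(u,v)), where λ is extended linearly in its first argument to kG, (ᵍκ^L)(u,v) = ᵍ(κ^L(ᵍ⁻¹u, ᵍ⁻¹v)) with ᵍ(w⊗h) = ᵍw⊗ghg⁻¹, and (1 − γ)(x) = x − γ(x) for x ∈ V⊗kG. Then the assignment g ↦ g for g ∈ G and v ↦ v + γ(v) for v ∈ V extends to an isomorphism of filtered algebras f: H_{0,κ'} → H_{λ,κ}. -/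

import Mathlib

open TensorProduct

noncomputable section

namespace DeformKoszul

variable (k G V : Type) [Field k] [Group G] [AddCommGroup V] [Module k V]

/-- The free `k`-algebra on the vector space `kG ⊕ V`. -/
abbrev FreeAlg := TensorAlgebra k (MonoidAlgebra k G × V)

/-- The canonical embedding of the group algebra `kG` into the free algebra. -/
def gIn : MonoidAlgebra k G →ₗ[k] FreeAlg k G V :=
  (TensorAlgebra.ι k).comp (LinearMap.inl k (MonoidAlgebra k G) V)

/-- The canonical embedding of `V` into the free algebra. -/
def vIn : V →ₗ[k] FreeAlg k G V :=
  (TensorAlgebra.ι k).comp (LinearMap.inr k (MonoidAlgebra k G) V)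

/-- `V ⊗ kG → FreeAlg`, `v ⊗ x ↦ v·x`. -/
def embVG : V ⊗[k] MonoidAlgebra k G →ₗ[k] FreeAlg k G V :=
  (LinearMap.mul' k _).comp (TensorProduct.map (vIn k G V) (gIn k G V))

variable (ρ : Representation k G V)

/-- The defining relations of `H_{λ,κ}`: `kG` is a subalgebra (with the same unit),
`g·v = (ᵍv)·g + λ(g,v)`, and `v·w = w·v + κ^L(v,w) + κ^C(v,w)`. -/
inductive PRel (lam : G → V →ₗ[k] MonoidAlgebra k G)
    (κC : V →ₗ[k] V →ₗ[k] MonoidAlgebra k G)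
    (κL : V →ₗ[k] V →ₗ[k] (V ⊗[k] MonoidAlgebra k G)) :
    FreeAlg k G V → FreeAlg k G V → Prop
  | unit : PRel lam κC κL (gIn k G V 1) 1
  | gmul (x y : MonoidAlgebra k G) :
      PRel lam κC κL (gIn k G V x * gIn k G V y) (gIn k G V (x * y))
  | act (g : G) (v : V) :
      PRel lam κC κL (gIn k G V (MonoidAlgebra.of k G g) * vIn k G V v)
        (vIn k G V (ρ g v) * gIn k G V (MonoidAlgebra.of k G g) + gIn k G V (lam g v))
  | comm (v w : V) :
      PRel lam κC κL (vIn k G V v * vIn k G V w)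
        (vIn k G V w * vIn k G V v + embVG k G V (κL v w) + gIn k G V (κC v w))

variable (lam : G → V →ₗ[k] MonoidAlgebra k G)
    (κC : V →ₗ[k] V →ₗ[k] MonoidAlgebra k G)
    (κL : V →ₗ[k] V →ₗ[k] (V ⊗[k] MonoidAlgebra k G))

/-- The algebra `H_{λ,κ}`.  For `lam = 0`, `κC = 0`, `κL = 0` this is (the presentation
of) the skew group algebra `S(V) ⋊ G`. -/
abbrev HP := RingQuot (PRel k G V ρ lam κC κL)

/-- The quotient map onto `H_{λ,κ}`. -/
def toHP : FreeAlg k G V →ₐ[k] HP k G V ρ lam κC κL :=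
  RingQuot.mkAlgHom k (PRel k G V ρ lam κC κL)

/-- Degree-`n` part of the free algebra: `kG` has degree 0 and `V` degree 1. -/
def grT : ℕ → Submodule k (FreeAlg k G V)
  | 0 => Subalgebra.toSubmodule (Algebra.adjoin k (Set.range (gIn k G V)))
  | n+1 => grT n * (LinearMap.range (vIn k G V) * grT 0)

/-- Filtration of the free algebra, `kG` in degree 0 and `V` in degree 1. -/
def filtT : ℕ → Submodule k (FreeAlg k G V)
  | 0 => grT k G V 0
  | n+1 => filtT n ⊔ grT k G V (n+1)

/-- The induced filtration on `H_{λ,κ}`. -/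
def filtP (d : ℕ) : Submodule k (HP k G V ρ lam κC κL) :=
  (filtT k G V d).map (toHP k G V ρ lam κC κL).toLinearMap

/-- `H_{λ,κ}` is a PBW deformation of `S(V) ⋊ G`:  the associated graded algebra is
`S(V) ⋊ G`, equivalently (all filtered pieces being finite dimensional) each filtered
piece has the same dimension as the corresponding one of `S(V) ⋊ G = H_{0,0}`. -/
def IsPBWP : Prop :=
  ∀ d, Module.finrank k (filtP k G V ρ lam κC κL d) = Module.finrank k (filtP k G V ρ 0 0 0 d)

section Untwist

variable [Fintype G]

/-- Extension of `λ` linearly in its first argument to `kG`. -/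
def lamExt : MonoidAlgebra k G →ₗ[k] V →ₗ[k] MonoidAlgebra k G :=
  (Finsupp.lift (V →ₗ[k] MonoidAlgebra k G) k G lam).comp
    (MonoidAlgebra.coeffLinearEquiv k).toLinearMap

/-- `γ : V ⊗ kG → kG`, `γ(v ⊗ g) = (1/|G|) Σ_{a,b} λ_{ab}(b, ᵇ⁻¹v)·a·g`. -/
def γmap : V ⊗[k] MonoidAlgebra k G →ₗ[k] MonoidAlgebra k G :=
  (Fintype.card G : k)⁻¹ • ∑ a : G, ∑ b : G,
    (TensorProduct.lid k (MonoidAlgebra k G)).toLinearMap.comp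
      (TensorProduct.map
        ((Finsupp.lapply (a * b)).comp
          ((MonoidAlgebra.coeffLinearEquiv k).toLinearMap.comp ((lam b).comp (ρ b⁻¹))))
        (LinearMap.mulLeft k (MonoidAlgebra.of k G a)))

/-- `γ(v) := γ(v ⊗ 1)`. -/
def γ0 : V →ₗ[k] MonoidAlgebra k G :=
  (γmap k G V ρ lam).comp ((TensorProduct.mk k V (MonoidAlgebra k G)).flip 1)

/-- conjugation `x ↦ g·x·g⁻¹` on the group algebra. -/
def conjKG (g : G) : MonoidAlgebra k G →ₗ[k] MonoidAlgebra k G :=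
  (LinearMap.mulRight k (MonoidAlgebra.of k G g⁻¹)).comp
    (LinearMap.mulLeft k (MonoidAlgebra.of k G g))

/-- the `G`-action `ᵍ(w ⊗ h) = ᵍw ⊗ ghg⁻¹` on `V ⊗ kG`. -/
def conjVG (g : G) : V ⊗[k] MonoidAlgebra k G →ₗ[k] V ⊗[k] MonoidAlgebra k G :=
  TensorProduct.map (ρ g) (conjKG k G g)

/-- `(ᵍκ^L)(u,v) = ᵍ(κ^L(ᵍ⁻¹u, ᵍ⁻¹v))`. -/
def κLconj (g : G) : V →ₗ[k] V →ₗ[k] (V ⊗[k] MonoidAlgebra k G) :=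
  ((κL.comp (ρ g⁻¹)).compl₂ (ρ g⁻¹)).compr₂ (conjVG k G V ρ g)

/-- the `V ⊗ kG`-component of `κ'`:  `(1/|G|) Σ_g (ᵍκ^L)(u,v)`. -/
def κL' : V →ₗ[k] V →ₗ[k] (V ⊗[k] MonoidAlgebra k G) :=
  (Fintype.card G : k)⁻¹ • ∑ g : G, κLconj k G V ρ κL g

/-- the `kG`-component of `κ'`:
`γ(u)γ(v) − γ(v)γ(u) + λ(γ(u),v) − λ(γ(v),u) + κ^C(u,v) − (1/|G|) Σ_g γ((ᵍκ^L)(u,v))`. -/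
def κC' : V →ₗ[k] V →ₗ[k] MonoidAlgebra k G :=
  (LinearMap.mul k (MonoidAlgebra k G)).compl₁₂ (γ0 k G V ρ lam) (γ0 k G V ρ lam)
  - ((LinearMap.mul k (MonoidAlgebra k G)).compl₁₂ (γ0 k G V ρ lam) (γ0 k G V ρ lam)).flip
  + (lamExt k G V lam).comp (γ0 k G V ρ lam)
  - ((lamExt k G V lam).comp (γ0 k G V ρ lam)).flip
  + κC
  - (Fintype.card G : k)⁻¹ • ((∑ g : G, κLconj k G V ρ κL g).compr₂ (γmap k G V ρ lam))

end Untwist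

end DeformKoszul

open DeformKoszul

/-!
Call `i : kG → A`, `j : V → A` a model of `(λ, κ)` if they satisfy the defining relations of
`H_{λ,κ}`, so that `H_{λ,κ}` is the universal model. For any linear `γ : V → kG`, the maps `i` and
`j + iγ` form a model of shifted parameters `(λ', κ')`, and shifting by `-γ` undoes this; hence
`v ↦ v + γ(v)` is an isomorphism `H_{λ',κ'} ≅ H_{λ,κ}`, filtered because `γ` has degree zero.

It remains to see that the `γ` of the theorem shifts `(λ, κ)` to `(0, κ')`. In `H_{λ,κ}` conjugation
by `g` sends `ᵍ⁻¹v` to `v + γ_g(v)` with `γ_g(v) = λ(g, ᵍ⁻¹v) g⁻¹`, and `γ` is the average of the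
`γ_g`. As `kG ⊕ (V ⊗ kG)` embeds in `H_{λ,κ}`, which is what the PBW property says in degree one,
comparing conjugation by `gh` with iterated conjugation shows that `γ_g` is a cocycle, so that
`v + γ(v)` is moved by `G` as `v` is; and conjugating the relation for `[u, v]` expresses `ᵍκ^L`
through `κ^L` and `γ_g`. Averaging over `G` gives `κ'`.
-/

namespace DeformKoszul

attribute [local instance] LieRing.ofAssociativeRing

section MulMap

variable {k V A R : Type*} [CommSemiring k] [AddCommMonoid V] [Module k V]
  [Semiring A] [Algebra k A] [Semiring R] [Algebra k R]

/-- The multiplication map `v ⊗ x ↦ j(v) i(x)`.  For `i = id` it is the right `R`-linear extension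
of `j` to `V ⊗ R`, which is how the paper's `γ : V → kG` acts on `V ⊗ kG`. -/
def mulMap (i : R →ₐ[k] A) (j : V →ₗ[k] A) : V ⊗[k] R →ₗ[k] A :=
  LinearMap.mul' k A ∘ₗ TensorProduct.map j i.toLinearMap

@[simp]
lemma mulMap_tmul (i : R →ₐ[k] A) (j : V →ₗ[k] A) (v : V) (x : R) :
    mulMap i j (v ⊗ₜ x) = j v * i x := rfl

lemma mulMap_add_comp (i : R →ₐ[k] A) (j : V →ₗ[k] A) (γ : V →ₗ[k] R) (t : V ⊗[k] R) :
    mulMap i (j + i.toLinearMap ∘ₗ γ) t = mulMap i j t + i (mulMap (AlgHom.id k R) γ t) := by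
  induction t with
  | zero => simp only [map_zero, add_zero]
  | add s t hs ht => simp only [map_add, hs, ht]; abel
  | tmul v x => simp [add_mul]

lemma mulMap_neg {A : Type*} [Ring A] [Algebra k A] (i : R →ₐ[k] A) (j : V →ₗ[k] A)
    (t : V ⊗[k] R) : mulMap i (-j) t = -mulMap i j t := by
  induction t with
  | zero => simp only [map_zero, neg_zero]
  | add s t hs ht => simp only [map_add, hs, ht, neg_add]
  | tmul v x => simp

lemma map_mulMap {B : Type*} [Semiring B] [Algebra k B] (f : A →ₐ[k] B) (i : R →ₐ[k] A)
    (j : V →ₗ[k] A) (t : V ⊗[k] R) :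
    f (mulMap i j t) = mulMap (f.comp i) (f.toLinearMap ∘ₗ j) t := by
  induction t with
  | zero => simp only [map_zero]
  | add s t hs ht => simp only [map_add, hs, ht]
  | tmul v x => simp

lemma range_mulMap (i : R →ₐ[k] A) (j : V →ₗ[k] A) :
    LinearMap.range (mulMap i j) = LinearMap.range j * LinearMap.range i.toLinearMap := by
  rw [mulMap, LinearMap.range_comp, TensorProduct.range_map, Submodule.mul_eq_map₂,
    Submodule.map_map₂]
  rfl

/-- The canonical map `kG ⊕ (V ⊗ kG) → A`, `(x, v ⊗ y) ↦ i(x) + j(v) i(y)`, onto the part of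
filtration degree at most one. -/
def degLEOneMap (i : R →ₐ[k] A) (j : V →ₗ[k] A) : R × (V ⊗[k] R) →ₗ[k] A :=
  i.toLinearMap.coprod (mulMap i j)

lemma degLEOneMap_apply (i : R →ₐ[k] A) (j : V →ₗ[k] A) (p : R × (V ⊗[k] R)) :
    degLEOneMap i j p = i p.1 + mulMap i j p.2 := rfl

lemma range_degLEOneMap (i : R →ₐ[k] A) (j : V →ₗ[k] A) :
    LinearMap.range (degLEOneMap i j) =
      LinearMap.range i.toLinearMap ⊔ LinearMap.range j * LinearMap.range i.toLinearMap := by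
  rw [degLEOneMap, LinearMap.range_coprod, range_mulMap]

lemma map_degLEOneMap {B : Type*} [Semiring B] [Algebra k B] (f : A →ₐ[k] B) (i : R →ₐ[k] A)
    (j : V →ₗ[k] A) (p : R × (V ⊗[k] R)) :
    f (degLEOneMap i j p) = degLEOneMap (f.comp i) (f.toLinearMap ∘ₗ j) p := by
  rw [degLEOneMap_apply, degLEOneMap_apply, map_add, map_mulMap, AlgHom.comp_apply]

lemma injective_of_degLEOneMap_injective {i : R →ₐ[k] A} {j : V →ₗ[k] A}
    (hij : Function.Injective (degLEOneMap i j)) : Function.Injective i := by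
  intro x y hxy
  have : degLEOneMap i j (x, 0) = degLEOneMap i j (y, 0) := by
    simp only [degLEOneMap_apply, hxy]
  exact congrArg Prod.fst (hij this)

lemma eq_of_mulMap_add_eq {i : R →ₐ[k] A} {j : V →ₗ[k] A}
    (hij : Function.Injective (degLEOneMap i j)) {s t : V ⊗[k] R} {x y : R}
    (h : mulMap i j s + i x = mulMap i j t + i y) : s = t := by
  have : degLEOneMap i j (x, s) = degLEOneMap i j (y, t) := by
    simp only [degLEOneMap_apply, add_comm (i _), h]
  exact congrArg Prod.snd (hij this)

end MulMap

lemma monoidAlgebra_linearMap_ext {k G M : Type*} [CommSemiring k] [Monoid G] [AddCommMonoid M]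
    [Module k M] {f f' : MonoidAlgebra k G →ₗ[k] M}
    (h : ∀ g, f (MonoidAlgebra.of k G g) = f' (MonoidAlgebra.of k G g)) : f = f' :=
  (MonoidAlgebra.basis G k).ext h

section AdSymbol

variable {k G V : Type*} [CommRing k] [Monoid G] [AddCommGroup V] [Module k V]

/-- The degree-one part of the commutator `[x, v]` of `x ∈ kG` and `v ∈ V` in the skew group
algebra, written in `V ⊗ kG`; on group elements it is `(ᵍv - v) ⊗ g`. -/
def adSymbol (ρ : Representation k G V) :
    MonoidAlgebra k G →ₗ[k] V →ₗ[k] V ⊗[k] MonoidAlgebra k G :=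
  (MonoidAlgebra.basis G k).constr k fun g =>
    (TensorProduct.mk k V (MonoidAlgebra k G)).flip (MonoidAlgebra.of k G g) ∘ₗ (ρ g - 1)

lemma adSymbol_of (ρ : Representation k G V) (g : G) (v : V) :
    adSymbol ρ (MonoidAlgebra.of k G g) v = (ρ g v - v) ⊗ₜ MonoidAlgebra.of k G g := by
  rw [adSymbol, MonoidAlgebra.of_apply, ← MonoidAlgebra.basis_apply, Module.Basis.constr_basis]
  rfl

end AdSymbol

section Params

/-- The data `(λ, κ^C, κ^L)` on which the relations of `H_{λ,κ}` depend. -/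
structure Params (k G V : Type) [Field k] [AddCommGroup V] [Module k V] where
  /-- The map `λ`, on group elements. -/
  lam : G → V →ₗ[k] MonoidAlgebra k G
  /-- The component `κ^C` of `κ`. -/
  κC : V →ₗ[k] V →ₗ[k] MonoidAlgebra k G
  /-- The component `κ^L` of `κ`. -/
  κL : V →ₗ[k] V →ₗ[k] V ⊗[k] MonoidAlgebra k G

variable {k G V : Type} [Field k] [Group G] [AddCommGroup V] [Module k V]

lemma lamExt_of (lam : G → V →ₗ[k] MonoidAlgebra k G) (g : G) :
    lamExt k G V lam (MonoidAlgebra.of k G g) = lam g := by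
  simp [lamExt]

/-- The maps `i : kG → A` and `j : V → A` satisfy the defining relations of `H_{λ,κ}`. -/
structure IsModel {A : Type*} [Ring A] [Algebra k A] (ρ : Representation k G V)
    (D : Params k G V) (i : MonoidAlgebra k G →ₐ[k] A) (j : V →ₗ[k] A) : Prop where
  act (g : G) (v : V) : i (MonoidAlgebra.of k G g) * j v =
    j (ρ g v) * i (MonoidAlgebra.of k G g) + i (D.lam g v)
  lie (u v : V) : ⁅j u, j v⁆ = mulMap i j (D.κL u v) + i (D.κC u v)

/-- The parameters `D'` are those of the algebra presented by `D` in terms of the new generators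
`v + γ(v)`; compare `IsModel.shift`. -/
structure IsShift (ρ : Representation k G V) (γ : V →ₗ[k] MonoidAlgebra k G)
    (D D' : Params k G V) : Prop where
  lam_eq (g : G) (v : V) : D'.lam g v + γ (ρ g v) * MonoidAlgebra.of k G g =
    D.lam g v + MonoidAlgebra.of k G g * γ v
  κL_eq (u v : V) : D'.κL u v = D.κL u v + adSymbol ρ (γ u) v - adSymbol ρ (γ v) u
  κC_eq (u v : V) : D'.κC u v =
    D.κC u v + lamExt k G V D.lam (γ u) v - lamExt k G V D.lam (γ v) u + ⁅γ u, γ v⁆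
      - mulMap (AlgHom.id k _) γ (D'.κL u v)

variable {ρ : Representation k G V} {D D' : Params k G V} {γ : V →ₗ[k] MonoidAlgebra k G}

namespace IsModel

variable {A : Type*} [Ring A] [Algebra k A] {i : MonoidAlgebra k G →ₐ[k] A} {j : V →ₗ[k] A}

lemma lie_groupAlgebra (h : IsModel ρ D i j) (x : MonoidAlgebra k G) (v : V) :
    ⁅i x, j v⁆ = mulMap i j (adSymbol ρ x v) + i (lamExt k G V D.lam x v) := by
  suffices (LinearMap.mulRight k (j v) - LinearMap.mulLeft k (j v)) ∘ₗ i.toLinearMap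
      = mulMap i j ∘ₗ (adSymbol ρ).flip v + i.toLinearMap ∘ₗ (lamExt k G V D.lam).flip v from
    congr($this x)
  refine monoidAlgebra_linearMap_ext fun g => ?_
  simp only [LinearMap.sub_apply, LinearMap.add_apply, LinearMap.comp_apply,
    LinearMap.mulRight_apply, LinearMap.mulLeft_apply, LinearMap.flip_apply,
    AlgHom.toLinearMap_apply, adSymbol_of, lamExt_of, mulMap_tmul, map_sub, sub_mul, h.act]
  abel

lemma lie_add_add (h : IsModel ρ D i j) (u v : V) (x y : MonoidAlgebra k G) :
    ⁅j u + i x, j v + i y⁆ = mulMap i j (D.κL u v + adSymbol ρ x v - adSymbol ρ y u)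
      + i (D.κC u v + lamExt k G V D.lam x v - lamExt k G V D.lam y u + ⁅x, y⁆) := by
  have hxy : ⁅i x, i y⁆ = i ⁅x, y⁆ := by simp only [Ring.lie_def, map_sub, map_mul]
  rw [add_lie, lie_add, lie_add, ← lie_skew (j u) (i y), h.lie, h.lie_groupAlgebra,
    h.lie_groupAlgebra, hxy]
  simp only [map_add, map_sub]
  abel

theorem shift (h : IsModel ρ D i j) (hγ : IsShift ρ γ D D') :
    IsModel ρ D' i (j + i.toLinearMap ∘ₗ γ) where
  act g v := by
    have hlam := congrArg i (hγ.lam_eq g v)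
    simp only [map_add, map_mul] at hlam
    simp only [LinearMap.add_apply, LinearMap.comp_apply, AlgHom.toLinearMap_apply, mul_add,
      add_mul, h.act]
    rw [add_assoc, ← hlam]
    abel
  lie u v := by
    simp only [LinearMap.add_apply, LinearMap.comp_apply, AlgHom.toLinearMap_apply]
    rw [h.lie_add_add, mulMap_add_comp, ← hγ.κL_eq, add_assoc, ← map_add, hγ.κC_eq,
      add_sub_cancel]

end IsModel

namespace IsShift

lemma lamExt_eq (h : IsShift ρ γ D D') (x : MonoidAlgebra k G) (v : V) :
    lamExt k G V D'.lam x v =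
      lamExt k G V D.lam x v + ⁅x, γ v⁆ - mulMap (AlgHom.id k _) γ (adSymbol ρ x v) := by
  suffices (lamExt k G V D'.lam).flip v = (lamExt k G V D.lam).flip v
      + (LinearMap.mulRight k (γ v) - LinearMap.mulLeft k (γ v))
      - mulMap (AlgHom.id k _) γ ∘ₗ (adSymbol ρ).flip v from congr($this x)
  refine monoidAlgebra_linearMap_ext fun g => ?_
  simp only [LinearMap.sub_apply, LinearMap.add_apply, LinearMap.comp_apply,
    LinearMap.mulRight_apply, LinearMap.mulLeft_apply, LinearMap.flip_apply,
    adSymbol_of, lamExt_of, mulMap_tmul, map_sub, sub_mul, AlgHom.id_apply,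
    eq_sub_of_add_eq (h.lam_eq g v)]
  abel

theorem symm (h : IsShift ρ γ D D') : IsShift ρ (-γ) D' D where
  lam_eq g v := by
    simp only [LinearMap.neg_apply, neg_mul, mul_neg, eq_sub_of_add_eq (h.lam_eq g v)]
    abel
  κL_eq u v := by
    simp only [h.κL_eq u v, LinearMap.neg_apply, map_neg]
    abel
  κC_eq u v := by
    simp only [h.κC_eq u v, mulMap_neg, h.κL_eq u v, h.lamExt_eq, LinearMap.neg_apply, map_neg,
      map_add, map_sub, neg_lie, lie_neg]
    rw [← lie_skew (γ u) (γ v)]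
    abel

end IsShift

end Params

section FreeAlgebra

variable {k G V : Type} [Field k] [AddCommGroup V] [Module k V]
  {A : Type*} [Semiring A] [Algebra k A]

lemma freeAlg_hom_ext {f f' : FreeAlg k G V →ₐ[k] A}
    (hg : f.toLinearMap ∘ₗ gIn k G V = f'.toLinearMap ∘ₗ gIn k G V)
    (hv : f.toLinearMap ∘ₗ vIn k G V = f'.toLinearMap ∘ₗ vIn k G V) : f = f' :=
  TensorAlgebra.hom_ext (LinearMap.prod_ext hg hv)

/-- The algebra map out of the free algebra given by linear maps on `kG` and `V`. -/
def freeLift (i : MonoidAlgebra k G →ₗ[k] A) (j : V →ₗ[k] A) : FreeAlg k G V →ₐ[k] A :=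
  TensorAlgebra.lift k (i.coprod j)

@[simp]
lemma freeLift_gIn (i : MonoidAlgebra k G →ₗ[k] A) (j : V →ₗ[k] A) (x : MonoidAlgebra k G) :
    freeLift i j (gIn k G V x) = i x := by
  simp [freeLift, gIn]

@[simp]
lemma freeLift_vIn (i : MonoidAlgebra k G →ₗ[k] A) (j : V →ₗ[k] A) (v : V) :
    freeLift i j (vIn k G V v) = j v := by
  simp [freeLift, vIn]

lemma freeLift_embVG [Monoid G] (i : MonoidAlgebra k G →ₐ[k] A) (j : V →ₗ[k] A)
    (t : V ⊗[k] MonoidAlgebra k G) : freeLift i.toLinearMap j (embVG k G V t) = mulMap i j t := by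
  induction t with
  | zero => simp only [map_zero]
  | add s t hs ht => simp only [map_add, hs, ht]
  | tmul v x => simp [embVG]

end FreeAlgebra

section Presentation

variable {k G V : Type} [Field k] [Group G] [AddCommGroup V] [Module k V]

/-- The algebra `H_{λ,κ}` attached to the data `D = (λ, κ^C, κ^L)`. -/
abbrev Params.Alg (ρ : Representation k G V) (D : Params k G V) :=
  HP k G V ρ D.lam D.κC D.κL

/-- The quotient map onto `D.Alg ρ`. -/
abbrev Params.proj (ρ : Representation k G V) (D : Params k G V) :
    FreeAlg k G V →ₐ[k] D.Alg ρ :=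
  toHP k G V ρ D.lam D.κC D.κL

/-- The canonical algebra map `kG → H_{λ,κ}`. -/
def Params.groupGen (ρ : Representation k G V) (D : Params k G V) :
    MonoidAlgebra k G →ₐ[k] D.Alg ρ :=
  AlgHom.ofLinearMap ((D.proj ρ).toLinearMap ∘ₗ gIn k G V)
    (.trans (b := D.proj ρ 1) (RingQuot.mkAlgHom_rel k PRel.unit) (map_one _))
    fun x y => .trans (b := D.proj ρ (gIn k G V x * gIn k G V y))
      (RingQuot.mkAlgHom_rel k (PRel.gmul x y)).symm (map_mul _ _ _)

/-- The canonical map `V → H_{λ,κ}`. -/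
def Params.vecGen (ρ : Representation k G V) (D : Params k G V) : V →ₗ[k] D.Alg ρ :=
  (D.proj ρ).toLinearMap ∘ₗ vIn k G V

variable {ρ : Representation k G V} {D D' : Params k G V}

lemma freeLift_groupGen_vecGen :
    freeLift (D.groupGen ρ).toLinearMap (D.vecGen ρ) = D.proj ρ :=
  freeAlg_hom_ext (LinearMap.ext fun x => freeLift_gIn _ _ x)
    (LinearMap.ext fun v => freeLift_vIn _ _ v)

lemma algHom_ext {A : Type*} [Semiring A] [Algebra k A] {f f' : D.Alg ρ →ₐ[k] A}
    (hg : f.comp (D.groupGen ρ) = f'.comp (D.groupGen ρ))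
    (hv : f.toLinearMap ∘ₗ D.vecGen ρ = f'.toLinearMap ∘ₗ D.vecGen ρ) : f = f' :=
  RingQuot.ringQuot_ext' _ _ _ (freeAlg_hom_ext (congrArg AlgHom.toLinearMap hg) hv)

theorem isModel_gen (ρ : Representation k G V) (D : Params k G V) :
    IsModel ρ D (D.groupGen ρ) (D.vecGen ρ) where
  act g v := by
    have h : D.proj ρ _ = D.proj ρ _ := RingQuot.mkAlgHom_rel k (PRel.act g v)
    rwa [map_add, map_mul, map_mul] at h
  lie u v := by
    have h : D.proj ρ _ = D.proj ρ _ := RingQuot.mkAlgHom_rel k (PRel.comm u v)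
    rw [map_add, map_add, map_mul, map_mul, ← freeLift_groupGen_vecGen] at h
    rw [Ring.lie_def, sub_eq_iff_eq_add', ← add_assoc]
    simpa only [freeLift_vIn, freeLift_gIn, freeLift_embVG, AlgHom.toLinearMap_apply] using h

namespace IsModel

variable {A : Type*} [Ring A] [Algebra k A] {i : MonoidAlgebra k G →ₐ[k] A} {j : V →ₗ[k] A}

/-- The algebra map out of `H_{λ,κ}` determined by a model. -/
def lift (h : IsModel ρ D i j) : D.Alg ρ →ₐ[k] A :=
  RingQuot.liftAlgHom k ⟨freeLift i.toLinearMap j, fun {x y} hxy => by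
    cases hxy with
    | unit => simp
    | gmul x y => simp
    | act g v => simpa using h.act g v
    | comm u v =>
      rw [map_add, map_add, map_mul, map_mul, freeLift_embVG, add_assoc,
        ← sub_eq_iff_eq_add']
      simpa only [Ring.lie_def, freeLift_vIn, freeLift_gIn, AlgHom.toLinearMap_apply]
        using h.lie u v⟩

lemma lift_comp_proj (h : IsModel ρ D i j) :
    h.lift.comp (D.proj ρ) = freeLift i.toLinearMap j :=
  AlgHom.ext fun x => RingQuot.liftAlgHom_mkAlgHom_apply _ _ _ x

lemma lift_comp_groupGen (h : IsModel ρ D i j) : h.lift.comp (D.groupGen ρ) = i :=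
  AlgHom.ext fun x => (congr($h.lift_comp_proj (gIn k G V x))).trans (freeLift_gIn _ _ x)

lemma lift_comp_vecGen (h : IsModel ρ D i j) : h.lift.toLinearMap ∘ₗ D.vecGen ρ = j :=
  LinearMap.ext fun v => (congr($h.lift_comp_proj (vIn k G V v))).trans (freeLift_vIn _ _ v)

end IsModel

namespace IsShift

variable {γ : V →ₗ[k] MonoidAlgebra k G}

/-- The algebra map `x ↦ x`, `v ↦ v + γ(v)`. -/
def hom (h : IsShift ρ γ D D') : D'.Alg ρ →ₐ[k] D.Alg ρ :=
  ((isModel_gen ρ D).shift h).lift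

lemma hom_comp_groupGen (h : IsShift ρ γ D D') :
    h.hom.comp (D'.groupGen ρ) = D.groupGen ρ :=
  IsModel.lift_comp_groupGen _

lemma hom_comp_vecGen (h : IsShift ρ γ D D') :
    h.hom.toLinearMap ∘ₗ D'.vecGen ρ = D.vecGen ρ + (D.groupGen ρ).toLinearMap ∘ₗ γ :=
  IsModel.lift_comp_vecGen _

lemma hom_comp_hom {γ' : V →ₗ[k] MonoidAlgebra k G} (h : IsShift ρ γ D D')
    (h' : IsShift ρ γ' D' D) (hγ : γ + γ' = 0) : h.hom.comp h'.hom = AlgHom.id k (D.Alg ρ) := by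
  refine algHom_ext ?_ ?_
  · rw [AlgHom.comp_assoc, hom_comp_groupGen, hom_comp_groupGen, AlgHom.id_comp]
  · rw [AlgHom.comp_toLinearMap, LinearMap.comp_assoc, hom_comp_vecGen, LinearMap.comp_add,
      hom_comp_vecGen, ← LinearMap.comp_assoc, ← AlgHom.comp_toLinearMap, hom_comp_groupGen,
      add_assoc, ← LinearMap.comp_add, hγ, LinearMap.comp_zero, add_zero]
    rfl

/-- The isomorphism `x ↦ x`, `v ↦ v + γ(v)`; its inverse is the one attached to `-γ`. -/
def equiv (h : IsShift ρ γ D D') : D'.Alg ρ ≃ₐ[k] D.Alg ρ :=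
  AlgEquiv.ofAlgHom h.hom h.symm.hom (h.hom_comp_hom h.symm (add_neg_cancel γ))
    (h.symm.hom_comp_hom h (neg_add_cancel γ))

end IsShift

end Presentation

section FreeFiltration

variable {k G V : Type} [Field k] [AddCommGroup V] [Module k V]

lemma grT_zero :
    grT k G V 0 = Subalgebra.toSubmodule (Algebra.adjoin k (Set.range (gIn k G V))) := by
  rw [grT]

lemma grT_succ (n : ℕ) :
    grT k G V (n + 1) = grT k G V n * (LinearMap.range (vIn k G V) * grT k G V 0) := by
  conv_lhs => rw [grT]

lemma filtT_zero : filtT k G V 0 = grT k G V 0 := rfl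

lemma filtT_succ (n : ℕ) : filtT k G V (n + 1) = filtT k G V n ⊔ grT k G V (n + 1) := rfl

lemma grT_zero_mul_grT_zero : grT k G V 0 * grT k G V 0 = grT k G V 0 := by
  rw [grT_zero]
  exact Subalgebra.isIdempotentElem_toSubmodule _

lemma grT_mul_grT_zero (n : ℕ) : grT k G V n * grT k G V 0 = grT k G V n := by
  cases n with
  | zero => exact grT_zero_mul_grT_zero
  | succ n => rw [grT_succ, mul_assoc, mul_assoc, grT_zero_mul_grT_zero]

lemma filtT_mul_grT_zero (n : ℕ) : filtT k G V n * grT k G V 0 = filtT k G V n := by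
  induction n with
  | zero => exact grT_zero_mul_grT_zero
  | succ n ih => rw [filtT_succ, Submodule.sup_mul, ih, grT_mul_grT_zero]

lemma filtT_mul_range_vIn_le (n : ℕ) :
    filtT k G V n * (LinearMap.range (vIn k G V) * grT k G V 0) ≤ filtT k G V (n + 1) := by
  induction n with
  | zero =>
    rw [filtT_succ, grT_succ, filtT_zero]
    exact le_sup_right
  | succ n ih =>
    rw [filtT_succ n, Submodule.sup_mul, ← grT_succ, filtT_succ (n + 1)]
    exact sup_le_sup_right ih _

/-- The endomorphism `x ↦ x`, `v ↦ v + γ(v)` of the free algebra. -/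
def freeShift (γ : V →ₗ[k] MonoidAlgebra k G) : FreeAlg k G V →ₐ[k] FreeAlg k G V :=
  freeLift (gIn k G V) (vIn k G V + gIn k G V ∘ₗ γ)

variable (γ : V →ₗ[k] MonoidAlgebra k G)

lemma map_freeShift_grT_zero : (grT k G V 0).map (freeShift γ).toLinearMap = grT k G V 0 := by
  rw [grT_zero, ← Subalgebra.map_toSubmodule, AlgHom.map_adjoin, ← Set.range_comp]
  congr! 3
  exact funext fun x => freeLift_gIn _ _ x

lemma map_freeShift_range_vIn_le :
    (LinearMap.range (vIn k G V)).map (freeShift γ).toLinearMap ≤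
      LinearMap.range (vIn k G V) ⊔ grT k G V 0 := by
  rintro _ ⟨_, ⟨v, rfl⟩, rfl⟩
  rw [AlgHom.toLinearMap_apply, freeShift, freeLift_vIn]
  refine Submodule.add_mem_sup ⟨v, rfl⟩ ?_
  rw [grT_zero]
  exact Algebra.subset_adjoin (Set.mem_range_self (γ v))

lemma map_freeShift_grT_le (n : ℕ) :
    (grT k G V n).map (freeShift γ).toLinearMap ≤ filtT k G V n := by
  induction n with
  | zero => rw [map_freeShift_grT_zero, filtT_zero]
  | succ n ih =>
    rw [grT_succ, Submodule.map_mul, Submodule.map_mul, map_freeShift_grT_zero]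
    calc _ ≤ filtT k G V n * ((LinearMap.range (vIn k G V) ⊔ grT k G V 0) * grT k G V 0) := by
          gcongr
          exact map_freeShift_range_vIn_le γ
      _ = filtT k G V n * (LinearMap.range (vIn k G V) * grT k G V 0) ⊔ filtT k G V n := by
          rw [Submodule.sup_mul, grT_zero_mul_grT_zero, Submodule.mul_sup, filtT_mul_grT_zero]
      _ ≤ filtT k G V (n + 1) :=
          sup_le (filtT_mul_range_vIn_le n) (le_sup_left.trans (filtT_succ n).ge)

lemma map_freeShift_filtT_le (n : ℕ) :
    (filtT k G V n).map (freeShift γ).toLinearMap ≤ filtT k G V n := by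
  induction n with
  | zero => exact map_freeShift_grT_le γ 0
  | succ n ih =>
    rw [filtT_succ, Submodule.map_sup]
    exact sup_le (ih.trans le_sup_left) (map_freeShift_grT_le γ (n + 1))

end FreeFiltration

section Filtration

variable {k G V : Type} [Field k] [Group G] [AddCommGroup V] [Module k V]
  {ρ : Representation k G V} {D D' : Params k G V}

namespace IsShift

variable {γ : V →ₗ[k] MonoidAlgebra k G}

lemma map_hom_filtP_le (h : IsShift ρ γ D D') (d : ℕ) :
    (filtP k G V ρ D'.lam D'.κC D'.κL d).map h.hom.toLinearMap ≤
      filtP k G V ρ D.lam D.κC D.κL d := by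
  have hcomp : h.hom.comp (D'.proj ρ) = (D.proj ρ).comp (freeShift γ) := by
    refine (IsModel.lift_comp_proj _).trans (freeAlg_hom_ext ?_ ?_)
    · refine LinearMap.ext fun x => ?_
      simp [freeShift, Params.groupGen]
    · refine LinearMap.ext fun v => ?_
      simp [freeShift, Params.groupGen, Params.vecGen]
  rw [filtP, ← Submodule.map_comp, ← AlgHom.comp_toLinearMap, hcomp, AlgHom.comp_toLinearMap,
    Submodule.map_comp]
  exact Submodule.map_mono (map_freeShift_filtT_le γ d)

theorem map_equiv_filtP (h : IsShift ρ γ D D') (d : ℕ) :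
    (filtP k G V ρ D'.lam D'.κC D'.κL d).map (h.equiv.toLinearEquiv : _ →ₗ[k] _) =
      filtP k G V ρ D.lam D.κC D.κL d :=
  le_antisymm (h.map_hom_filtP_le d) fun x hx =>
    ⟨h.symm.hom x, h.symm.map_hom_filtP_le d ⟨x, hx, rfl⟩, h.equiv.apply_symm_apply x⟩

end IsShift

end Filtration

section DegreeOne

variable {k G V : Type} [Field k] [Group G] [AddCommGroup V] [Module k V]
  {ρ : Representation k G V} {D : Params k G V}

lemma IsModel.range_mul_range_le {A : Type*} [Ring A] [Algebra k A]
    {i : MonoidAlgebra k G →ₐ[k] A} {j : V →ₗ[k] A} (h : IsModel ρ D i j) :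
    LinearMap.range i.toLinearMap * LinearMap.range j ≤ LinearMap.range (degLEOneMap i j) := by
  rw [Submodule.mul_le]
  rintro _ ⟨x, rfl⟩ _ ⟨v, rfl⟩
  refine ⟨(lamExt k G V D.lam x v, adSymbol ρ x v + v ⊗ₜ x), ?_⟩
  rw [degLEOneMap_apply, map_add, ← add_assoc, add_comm (i _), ← h.lie_groupAlgebra, mulMap_tmul,
    Ring.lie_def, sub_add_cancel, AlgHom.toLinearMap_apply]

lemma IsModel.sup_range_mul_eq {A : Type*} [Ring A] [Algebra k A]
    {i : MonoidAlgebra k G →ₐ[k] A} {j : V →ₗ[k] A} (h : IsModel ρ D i j) :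
    LinearMap.range i.toLinearMap ⊔
        LinearMap.range i.toLinearMap * (LinearMap.range j * LinearMap.range i.toLinearMap) =
      LinearMap.range (degLEOneMap i j) := by
  have hone : 1 ≤ LinearMap.range i.toLinearMap :=
    Submodule.one_le.mpr ⟨1, map_one i⟩
  have hidem : LinearMap.range i.toLinearMap * LinearMap.range i.toLinearMap =
      LinearMap.range i.toLinearMap :=
    Subalgebra.isIdempotentElem_toSubmodule i.range
  refine le_antisymm (sup_le ?_ ?_) ?_
  · rw [range_degLEOneMap]
    exact le_sup_left
  · calc _ ≤ LinearMap.range (degLEOneMap i j) * LinearMap.range i.toLinearMap := by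
          rw [← mul_assoc]
          gcongr
          exact h.range_mul_range_le
      _ = LinearMap.range (degLEOneMap i j) := by
          rw [range_degLEOneMap, Submodule.sup_mul, mul_assoc, hidem]
  · rw [range_degLEOneMap]
    exact sup_le_sup_left (le_mul_of_one_le_left' hone) _

lemma filtP_one :
    filtP k G V ρ D.lam D.κC D.κL 1 =
      LinearMap.range (degLEOneMap (D.groupGen ρ) (D.vecGen ρ)) := by
  have hzero : (grT k G V 0).map (D.proj ρ).toLinearMap =
      LinearMap.range (D.groupGen ρ).toLinearMap := by
    rw [grT_zero, ← Subalgebra.map_toSubmodule, AlgHom.map_adjoin, ← Set.range_comp]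
    exact congrArg Subalgebra.toSubmodule (Algebra.adjoin_eq (D.groupGen ρ).range)
  rw [filtP, filtT_succ, filtT_zero, grT_succ, Submodule.map_sup, Submodule.map_mul,
    Submodule.map_mul, hzero, ← LinearMap.range_comp, ← (isModel_gen ρ D).sup_range_mul_eq]
  rfl

/-- The representation on `kG ⊕ (V ⊗ kG)`, the quotient of `S(V) ⋊ G` by the elements of degree
at least two. -/
def truncRep (ρ : Representation k G V) :
    Representation k G (MonoidAlgebra k G × V ⊗[k] MonoidAlgebra k G) :=
  (Representation.leftRegular k G).prod (ρ.tprod (Representation.leftRegular k G))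

/-- Left multiplication by `v ∈ V` on `kG ⊕ (V ⊗ kG)`. -/
def truncVec (k G V : Type) [Field k] [Group G] [AddCommGroup V] [Module k V] :
    V →ₗ[k] Module.End k (MonoidAlgebra k G × V ⊗[k] MonoidAlgebra k G) :=
  ((TensorProduct.mk k V (MonoidAlgebra k G)).compl₂ (LinearMap.fst k _ _)).compr₂
    (LinearMap.inr k _ _)

lemma isModel_trunc (ρ : Representation k G V) :
    IsModel ρ ⟨0, 0, 0⟩ (truncRep ρ).asAlgebraHom (truncVec k G V) where
  act g v := by
    ext p
    all_goals simp [truncRep, truncVec]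
  lie u v := by
    ext p
    all_goals simp [truncVec, Ring.lie_def]

lemma asAlgebraHom_truncRep_one_zero (ρ : Representation k G V) (x : MonoidAlgebra k G) :
    (truncRep ρ).asAlgebraHom x (1, 0) = (x, 0) := by
  suffices (truncRep ρ).asAlgebraHom.toLinearMap.flip (1, 0) = LinearMap.inl k _ _ from
    congr($this x)
  refine monoidAlgebra_linearMap_ext fun g => ?_
  simp [truncRep, MonoidAlgebra.one_def]

lemma degLEOneMap_trunc_one_zero (ρ : Representation k G V)
    (p : MonoidAlgebra k G × V ⊗[k] MonoidAlgebra k G) :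
    degLEOneMap (truncRep ρ).asAlgebraHom (truncVec k G V) p (1, 0) = p := by
  have hmul (t) : mulMap (truncRep ρ).asAlgebraHom (truncVec k G V) t (1, 0) = (0, t) := by
    induction t with
    | zero => simp [Prod.zero_eq_mk]
    | add s t hs ht => simp [hs, ht]
    | tmul v x => simp [asAlgebraHom_truncRep_one_zero, truncVec]
  simp [degLEOneMap_apply, asAlgebraHom_truncRep_one_zero, hmul]

lemma degLEOneMap_injective_zero (ρ : Representation k G V) :
    Function.Injective (degLEOneMap (Params.groupGen ρ ⟨0, 0, 0⟩) (Params.vecGen ρ ⟨0, 0, 0⟩)) := by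
  let f := (isModel_trunc ρ).lift
  refine Function.LeftInverse.injective (g := fun a => f a (1, 0)) fun p => ?_
  change f _ (1, 0) = p
  rw [map_degLEOneMap, IsModel.lift_comp_groupGen, IsModel.lift_comp_vecGen,
    degLEOneMap_trunc_one_zero]

theorem degLEOneMap_injective_of_isPBWP [Finite G] [FiniteDimensional k V]
    (h : IsPBWP k G V ρ D.lam D.κC D.κL) :
    Function.Injective (degLEOneMap (D.groupGen ρ) (D.vecGen ρ)) := by
  have hfin : Module.Finite k (MonoidAlgebra k G) :=
    Module.Finite.equiv (MonoidAlgebra.coeffLinearEquiv k).symm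
  let f := degLEOneMap (D.groupGen ρ) (D.vecGen ρ)
  have hrank : Module.finrank k (MonoidAlgebra k G × V ⊗[k] MonoidAlgebra k G) =
      Module.finrank k (LinearMap.range f) := by
    rw [← filtP_one, h 1, ← LinearMap.finrank_range_of_inj (degLEOneMap_injective_zero ρ)]
    exact congrArg (fun S : Submodule k _ => Module.finrank k S) filtP_one.symm
  have hker : Module.finrank k (LinearMap.ker f) = 0 := by
    have := f.finrank_range_add_finrank_ker
    lia
  exact LinearMap.ker_eq_bot.mp (Submodule.finrank_eq_zero.mp hker)

end DegreeOne

section Conjugation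

lemma mul_lie_mul_of_mul_eq_one {A : Type*} [Ring A] {a b : A} (hba : b * a = 1) (x y : A) :
    a * ⁅x, y⁆ * b = ⁅a * x * b, a * y * b⁆ := by
  have hmul (x y : A) : a * x * b * (a * y * b) = a * (x * y) * b := by
    calc a * x * b * (a * y * b) = a * x * (b * a) * y * b := by noncomm_ring
      _ = a * (x * y) * b := by rw [hba, mul_one, mul_assoc a x y]
  rw [Ring.lie_def, Ring.lie_def, hmul, hmul, mul_sub, sub_mul]

variable {k G V : Type} [Field k] [Group G] [AddCommGroup V] [Module k V]

/-- The map `v ↦ λ(g, ᵍ⁻¹v) g⁻¹`, by which conjugation with `g` in `H_{λ,κ}` fails to be the action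
of `g` on `V`; compare `IsModel.conj_vec`. -/
def conjShift (ρ : Representation k G V) (lam : G → V →ₗ[k] MonoidAlgebra k G) (g : G) :
    V →ₗ[k] MonoidAlgebra k G :=
  LinearMap.mulRight k (MonoidAlgebra.of k G g⁻¹) ∘ₗ lam g ∘ₗ ρ g⁻¹

lemma conjShift_apply (ρ : Representation k G V) (lam : G → V →ₗ[k] MonoidAlgebra k G) (g : G)
    (v : V) : conjShift ρ lam g v = lam g (ρ g⁻¹ v) * MonoidAlgebra.of k G g⁻¹ := rfl

variable {ρ : Representation k G V} {D : Params k G V}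

namespace IsModel

variable {A : Type*} [Ring A] [Algebra k A] {i : MonoidAlgebra k G →ₐ[k] A} {j : V →ₗ[k] A}

lemma conj_vec (h : IsModel ρ D i j) (g : G) (v : V) :
    i (MonoidAlgebra.of k G g) * j (ρ g⁻¹ v) * i (MonoidAlgebra.of k G g⁻¹) =
      j v + i (conjShift ρ D.lam g v) := by
  rw [h.act, add_mul, mul_assoc, ← map_mul i,
    map_mul_eq_one (MonoidAlgebra.of k G) (mul_inv_cancel g), map_one, mul_one,
    ← map_mul, Representation.self_inv_apply, conjShift_apply]

lemma conj_mulMap (h : IsModel ρ D i j) (g : G) (t : V ⊗[k] MonoidAlgebra k G) :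
    i (MonoidAlgebra.of k G g) * mulMap i j t * i (MonoidAlgebra.of k G g⁻¹) =
      mulMap i (j + i.toLinearMap ∘ₗ conjShift ρ D.lam g) (conjVG k G V ρ g t) := by
  induction t with
  | zero => simp only [map_zero, mul_zero, zero_mul]
  | add s t hs ht => simp only [map_add, mul_add, add_mul, hs, ht]
  | tmul v x =>
    have hv := h.conj_vec g (ρ g v)
    rw [Representation.inv_self_apply] at hv
    simp only [conjVG, conjKG, TensorProduct.map_tmul, mulMap_tmul, LinearMap.add_apply,
      LinearMap.comp_apply, AlgHom.toLinearMap_apply, LinearMap.mulLeft_apply,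
      LinearMap.mulRight_apply, ← hv, map_mul]
    have hg := map_mul_eq_one i (map_mul_eq_one (MonoidAlgebra.of k G) (inv_mul_cancel g))
    calc _ = i (MonoidAlgebra.of k G g) * j v * 1 * i x * i (MonoidAlgebra.of k G g⁻¹) := by
          noncomm_ring
      _ = _ := by rw [← hg]; noncomm_ring

theorem conjShift_mul (h : IsModel ρ D i j) (hi : Function.Injective i) (g g' : G) (v : V) :
    conjShift ρ D.lam (g * g') v = conjShift ρ D.lam g v +
      MonoidAlgebra.of k G g * conjShift ρ D.lam g' (ρ g⁻¹ v) * MonoidAlgebra.of k G g⁻¹ := by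
  have hρ : ρ (g * g')⁻¹ v = ρ g'⁻¹ (ρ g⁻¹ v) := by
    rw [mul_inv_rev, map_mul, Module.End.mul_apply]
  have hg := h.conj_vec g v
  have hg' := h.conj_vec g' (ρ g⁻¹ v)
  refine hi (add_left_cancel (a := j v) ?_)
  rw [map_add, ← add_assoc, ← hg, ← h.conj_vec, hρ, map_mul, map_mul, mul_inv_rev, map_mul,
    map_mul, map_mul, map_mul, eq_sub_of_add_eq' hg'.symm]
  noncomm_ring

theorem κLconj_eq (h : IsModel ρ D i j) (hij : Function.Injective (degLEOneMap i j)) (g : G)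
    (u v : V) : κLconj k G V ρ D.κL g u v = D.κL u v
      + adSymbol ρ (conjShift ρ D.lam g u) v - adSymbol ρ (conjShift ρ D.lam g v) u := by
  have hg := map_mul_eq_one i (map_mul_eq_one (MonoidAlgebra.of k G) (inv_mul_cancel g))
  have hlie := mul_lie_mul_of_mul_eq_one hg (j (ρ g⁻¹ u)) (j (ρ g⁻¹ v))
  rw [h.conj_vec, h.conj_vec, h.lie_add_add, h.lie, mul_add, add_mul, h.conj_mulMap,
    mulMap_add_comp, ← map_mul, ← map_mul, add_assoc, ← map_add] at hlie
  exact eq_of_mulMap_add_eq hij hlie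

end IsModel

end Conjugation

section Averaging

lemma inv_card_smul_sum_const {k ι M : Type*} [DivisionRing k] [Fintype ι] [AddCommGroup M]
    [Module k M] (hcard : (Fintype.card ι : k) ≠ 0) (m : M) :
    (Fintype.card ι : k)⁻¹ • ∑ _x : ι, m = m := by
  rw [Finset.sum_const, Finset.card_univ, ← Nat.cast_smul_eq_nsmul k, inv_smul_smul₀ hcard]

variable {k G V : Type} [Field k] [Group G] [Fintype G] [AddCommGroup V] [Module k V]

lemma sum_coeff_mul_smul_of (y : MonoidAlgebra k G) (b : G) :
    ∑ a, y.coeff (a * b) • MonoidAlgebra.of k G a = y * MonoidAlgebra.of k G b⁻¹ := by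
  have hrepr (a : G) : (MonoidAlgebra.basis G k).repr (y * MonoidAlgebra.of k G b⁻¹) a =
      y.coeff (a * b) := by
    change (y * MonoidAlgebra.of k G b⁻¹).coeff a = _
    simp
  rw [← (MonoidAlgebra.basis G k).sum_repr (y * MonoidAlgebra.of k G b⁻¹)]
  refine Finset.sum_congr rfl fun a _ => ?_
  rw [hrepr, MonoidAlgebra.basis_apply, MonoidAlgebra.of_apply]

variable {ρ : Representation k G V} {lam : G → V →ₗ[k] MonoidAlgebra k G}

lemma γmap_tmul (v : V) (x : MonoidAlgebra k G) : γmap k G V ρ lam (v ⊗ₜ x) =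
    (Fintype.card G : k)⁻¹ • (∑ g, conjShift ρ lam g v) * x := by
  simp only [γmap, LinearMap.smul_apply, LinearMap.sum_apply]
  rw [smul_mul_assoc, Finset.sum_mul, Finset.sum_comm]
  congr! 2 with b
  simp only [conjShift_apply, ← sum_coeff_mul_smul_of, Finset.sum_mul, smul_mul_assoc]
  rfl

lemma γ0_apply (v : V) :
    γ0 k G V ρ lam v = (Fintype.card G : k)⁻¹ • ∑ g, conjShift ρ lam g v := by
  rw [← mul_one (_ • _), ← γmap_tmul]
  rfl

lemma γmap_eq_mulMap : γmap k G V ρ lam = mulMap (AlgHom.id k _) (γ0 k G V ρ lam) := by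
  refine TensorProduct.ext' fun v x => ?_
  rw [γmap_tmul, ← γ0_apply, mulMap_tmul, AlgHom.id_apply]

variable {D : Params k G V}

/-- The data `(0, κ')`. -/
def Params.untwist (ρ : Representation k G V) (D : Params k G V) : Params k G V :=
  ⟨0, κC' k G V ρ D.lam D.κC D.κL, κL' k G V ρ D.κL⟩

variable {A : Type*} [Ring A] [Algebra k A] {i : MonoidAlgebra k G →ₐ[k] A} {j : V →ₗ[k] A}

lemma IsModel.γ0_eq_conjShift_add (h : IsModel ρ D i j) (hi : Function.Injective i)
    (hcard : (Fintype.card G : k) ≠ 0) (g : G) (v : V) :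
    γ0 k G V ρ D.lam v = conjShift ρ D.lam g v +
      MonoidAlgebra.of k G g * γ0 k G V ρ D.lam (ρ g⁻¹ v) * MonoidAlgebra.of k G g⁻¹ := by
  calc γ0 k G V ρ D.lam v
      = (Fintype.card G : k)⁻¹ • ∑ g', conjShift ρ D.lam (g * g') v := by
        rw [γ0_apply, ← Equiv.sum_comp (Equiv.mulLeft g)]
        rfl
    _ = _ := by
        simp only [h.conjShift_mul hi, Finset.sum_add_distrib, smul_add,
          inv_card_smul_sum_const hcard, γ0_apply, mul_smul_comm, smul_mul_assoc,
          Finset.mul_sum, Finset.sum_mul]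

lemma IsModel.κL'_eq (h : IsModel ρ D i j) (hij : Function.Injective (degLEOneMap i j))
    (hcard : (Fintype.card G : k) ≠ 0) (u v : V) :
    κL' k G V ρ D.κL u v = D.κL u v + adSymbol ρ (γ0 k G V ρ D.lam u) v
      - adSymbol ρ (γ0 k G V ρ D.lam v) u := by
  simp only [κL', LinearMap.smul_apply, LinearMap.sum_apply, h.κLconj_eq hij,
    Finset.sum_sub_distrib, Finset.sum_add_distrib, smul_sub, smul_add,
    inv_card_smul_sum_const hcard, γ0_apply, map_smul, map_sum]

theorem IsModel.isShift_γ0 (h : IsModel ρ D i j) (hij : Function.Injective (degLEOneMap i j))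
    (hcard : (Fintype.card G : k) ≠ 0) :
    IsShift ρ (γ0 k G V ρ D.lam) D (D.untwist ρ) where
  lam_eq g v := by
    have hγ := h.γ0_eq_conjShift_add (injective_of_degLEOneMap_injective hij) hcard g (ρ g v)
    rw [Representation.inv_self_apply, conjShift_apply, Representation.inv_self_apply,
      ← add_mul] at hγ
    rw [hγ, mul_assoc, map_mul_eq_one (MonoidAlgebra.of k G) (inv_mul_cancel g), mul_one]
    exact zero_add _
  κL_eq := h.κL'_eq hij hcard
  κC_eq u v := by
    simp only [Params.untwist, κC', κL', γmap_eq_mulMap, LinearMap.sub_apply, LinearMap.add_apply,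
      LinearMap.smul_apply, LinearMap.compl₁₂_apply, LinearMap.flip_apply, LinearMap.comp_apply,
      LinearMap.compr₂_apply, LinearMap.mul_apply', map_smul, Ring.lie_def]
    abel

end Averaging

end DeformKoszul

theorem untwisting_isomorphism_explicit_general
    (k G V : Type) [Field k] [Group G] [Fintype G] [AddCommGroup V] [Module k V]
    (hcard : (Fintype.card G : k) ≠ 0) (ρ : Representation k G V)
    (lam : G → V →ₗ[k] MonoidAlgebra k G)
    (κC : V →ₗ[k] V →ₗ[k] MonoidAlgebra k G)
    (κL : V →ₗ[k] V →ₗ[k] (V ⊗[k] MonoidAlgebra k G))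
    (hinj : Function.Injective
      (degLEOneMap (Params.groupGen ρ ⟨lam, κC, κL⟩) (Params.vecGen ρ ⟨lam, κC, κL⟩))) :
    ∃ e : HP k G V ρ 0 (κC' k G V ρ lam κC κL) (κL' k G V ρ κL) ≃ₐ[k] HP k G V ρ lam κC κL,
      (∀ x : MonoidAlgebra k G,
        e (toHP k G V ρ 0 (κC' k G V ρ lam κC κL) (κL' k G V ρ κL) (gIn k G V x))
          = toHP k G V ρ lam κC κL (gIn k G V x)) ∧
      (∀ v : V,
        e (toHP k G V ρ 0 (κC' k G V ρ lam κC κL) (κL' k G V ρ κL) (vIn k G V v))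
          = toHP k G V ρ lam κC κL (vIn k G V v)
            + toHP k G V ρ lam κC κL (gIn k G V (γ0 k G V ρ lam v))) ∧
      (∀ d, Submodule.map (e.toLinearEquiv : _ →ₗ[k] _)
          (filtP k G V ρ 0 (κC' k G V ρ lam κC κL) (κL' k G V ρ κL) d)
        = filtP k G V ρ lam κC κL d) :=
  let D : Params k G V := ⟨lam, κC, κL⟩
  have hshift : IsShift ρ (γ0 k G V ρ lam) D (D.untwist ρ) :=
    (isModel_gen ρ D).isShift_γ0 hinj hcard
  ⟨hshift.equiv, fun x => congr($hshift.hom_comp_groupGen x),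
    fun v => congr($hshift.hom_comp_vecGen v), hshift.map_equiv_filtP⟩

/-- The explicit untwisting isomorphism (proof of **Theorem 6.1** of
Shepler–Witherspoon, "Deforming group actions on Koszul algebras"):  if char `k` is
coprime to `|G|` and `H_{λ,κ}` is a PBW deformation of `S(V) ⋊ G`, then with
`γ(v ⊗ g) = (1/|G|) Σ_{a,b} λ_{ab}(b, ᵇ⁻¹v)·ag` and `κ'` defined by
`κ'(u,v) = γ(u)γ(v) − γ(v)γ(u) + λ(γ(u),v) − λ(γ(v),u) + κ(u,v) − κ^L(u,v)
+ (1/|G|) Σ_g (1−γ)((ᵍκ^L)(u,v))`, the assignment `g ↦ g`, `v ↦ v + γ(v)` extends to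
an isomorphism of filtered algebras `f : H_{0,κ'} → H_{λ,κ}`. -/
theorem untwisting_isomorphism_explicit
    (k G V : Type) [Field k] [Group G] [Fintype G] [AddCommGroup V] [Module k V]
    [FiniteDimensional k V] (h2 : (2 : k) ≠ 0) (hcard : (Fintype.card G : k) ≠ 0)
    (ρ : Representation k G V)
    (lam : G → V →ₗ[k] MonoidAlgebra k G)
    (κC : V →ₗ[k] V →ₗ[k] MonoidAlgebra k G)
    (κL : V →ₗ[k] V →ₗ[k] (V ⊗[k] MonoidAlgebra k G))
    (hC : ∀ v, κC v v = 0) (hL : ∀ v, κL v v = 0)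
    (hPBW : IsPBWP k G V ρ lam κC κL) :
    ∃ e : HP k G V ρ 0 (κC' k G V ρ lam κC κL) (κL' k G V ρ κL) ≃ₐ[k] HP k G V ρ lam κC κL,
      (∀ x : MonoidAlgebra k G,
        e (toHP k G V ρ 0 (κC' k G V ρ lam κC κL) (κL' k G V ρ κL) (gIn k G V x))
          = toHP k G V ρ lam κC κL (gIn k G V x)) ∧
      (∀ v : V,
        e (toHP k G V ρ 0 (κC' k G V ρ lam κC κL) (κL' k G V ρ κL) (vIn k G V v))
          = toHP k G V ρ lam κC κL (vIn k G V v)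
            + toHP k G V ρ lam κC κL (gIn k G V (γ0 k G V ρ lam v))) ∧
      (∀ d, Submodule.map (e.toLinearEquiv : _ →ₗ[k] _)
          (filtP k G V ρ 0 (κC' k G V ρ lam κC κL) (κL' k G V ρ κL) d)
        = filtP k G V ρ lam κC κL d) :=
  untwisting_isomorphism_explicit_general k G V hcard ρ lam κC κL
    (degLEOneMap_injective_of_isPBWP hPBW)
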